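/- Let E be a real normed space, K ⊆ E a nontrivial cone with norm-base B_K, and A ⊆ E a nontrivial closed convex cone with norm-base B_A. Assume that cl S_{−K} is weakly compact. Then the following are equivalent: (1) cl S_A^0 ∩ cl S_{−K} = ∅; (2) there exists (x*, α) ∈ K^{aw#} with α > 0 such that x*(a) + α‖a‖ > 0 for all a ∈ A \ {0} and x*(k) + α‖k‖ < 0 for all k ∈ (−K) \ {0}; (3) there exists (x*, α) ∈ K^{aw#} such that x*(a) + α‖a‖ > 0 for all a ∈ A \ {0} and x*(k) + α‖k‖ < 0 for all k ∈ (−K) \ {0}; (4) A ∩ cl(conv(−K)) = {0} and 0 ∉ cl S_{−K}. Moreover, if additionally cl S_{cl(conv K)} is weakly compact, then these conditions are also equivalent to: (5) 0 ∉ cl S_{−K} and there exists a nonzero x* ∈ E* such that x*(a) ≥ 0 for all a ∈ A and x*(k) < 0 for all k ∈ (−cl(conv K)) \ {0}. -/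

import Mathlib

open Set

variable {E : Type*} [NormedAddCommGroup E] [NormedSpace ℝ E]

/-- `K` is a cone: contains `0` and is closed under nonnegative scalar multiplication. -/
def IsCone (K : Set E) : Prop :=
  (0 : E) ∈ K ∧ ∀ t : ℝ, 0 ≤ t → ∀ x ∈ K, t • x ∈ K

/-- A cone is nontrivial if it is neither `{0}` nor the whole space. -/
def IsNontrivialCone (K : Set E) : Prop :=
  IsCone K ∧ K ≠ {0} ∧ K ≠ Set.univ

/-- The norm-base of a cone: its intersection with the unit sphere. -/
def normBase (K : Set E) : Set E := {x ∈ K | ‖x‖ = 1}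

/-- Closure of a set with respect to the weak topology `σ(E, E*)`. -/
noncomputable def wClosure (S : Set E) : Set E :=
  (toWeakSpace ℝ E).symm '' closure ((toWeakSpace ℝ E) '' S)

/-- A set is weakly compact if it is compact in the weak topology `σ(E, E*)`. -/
def WeaklyCompact (S : Set E) : Prop :=
  IsCompact ((toWeakSpace ℝ E) '' S)

/-- A set is weakly closed if it equals its weak closure. -/
noncomputable def WeaklyClosed (S : Set E) : Prop :=
  wClosure S = S

/-- The (topological) dual cone `K⁺`. -/
def dualCone (K : Set E) : Set (E →L[ℝ] ℝ) :=
  {f | ∀ k ∈ K, 0 ≤ f k}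

/-- The set `K^#` of functionals strictly positive on `K \ {0}`. -/
def sharpCone (K : Set E) : Set (E →L[ℝ] ℝ) :=
  {f | ∀ k ∈ K, k ≠ 0 → 0 < f k}

/-- The set `K^{w#}` of functionals strictly positive on the weak closure of the norm-base. -/
noncomputable def wSharpCone (K : Set E) : Set (E →L[ℝ] ℝ) :=
  {f | ∀ x ∈ wClosure (normBase K), 0 < f x}

/-- The algebraic interior (core) of a set in a real vector space. -/
def core {X : Type*} [AddCommGroup X] [Module ℝ X] (Ω : Set X) : Set X :=
  {x ∈ Ω | ∀ v : X, ∃ ε > 0, ∀ t ∈ Set.Icc (0 : ℝ) ε, x + t • v ∈ Ω}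

/-- The augmented dual cone `K^{a+}`. -/
def augDualCone (K : Set E) : Set ((E →L[ℝ] ℝ) × ℝ) :=
  {p | 0 ≤ p.2 ∧ ∀ y ∈ K, 0 ≤ p.1 y - p.2 * ‖y‖}

/-- The set `K^{a#}`. -/
def augSharpCone (K : Set E) : Set ((E →L[ℝ] ℝ) × ℝ) :=
  {p | 0 ≤ p.2 ∧ p.1 ∈ sharpCone K ∧ ∀ y ∈ K, y ≠ 0 → 0 < p.1 y - p.2 * ‖y‖}

/-- The set `K^{aw#}`. -/
noncomputable def augWSharpCone (K : Set E) : Set ((E →L[ℝ] ℝ) × ℝ) :=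
  {p | 0 ≤ p.2 ∧ p.1 ∈ sharpCone K ∧ ∀ y ∈ wClosure (normBase K), p.2 < p.1 y}

/-- `S_C = conv(B_C)`. -/
noncomputable def convBase (C : Set E) : Set E := convexHull ℝ (normBase C)

/-- `S_C^0 = conv({0} ∪ B_C)`. -/
noncomputable def convBase0 (C : Set E) : Set E := convexHull ℝ ({0} ∪ normBase C)

theorem IsCone.neg {K : Set E} (hK : IsCone K) : IsCone (-K) :=
  ⟨by simpa using hK.1, fun t ht x hx => by simpa using hK.2 t ht _ hx⟩

theorem IsCone.inv_norm_smul_mem_normBase {K : Set E} (hK : IsCone K) {k : E} (hk : k ∈ K)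
    (h0 : k ≠ 0) : ‖k‖⁻¹ • k ∈ normBase K :=
  ⟨hK.2 _ (by positivity) _ hk, by
    rw [norm_smul, norm_inv, norm_norm, inv_mul_cancel₀ (norm_ne_zero_iff.2 h0)]⟩

/-- A bound of a linear functional on the norm-base propagates to the whole cone. -/
theorem IsCone.lt_apply_of_normBase {K : Set E} (hK : IsCone K) (f : E →L[ℝ] ℝ) {c : ℝ}
    (hf : ∀ b ∈ normBase K, c < f b) {k : E} (hk : k ∈ K) (h0 : k ≠ 0) : c * ‖k‖ < f k := by
  have h := hf _ (hK.inv_norm_smul_mem_normBase hk h0)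
  have hn : 0 < ‖k‖ := norm_pos_iff.2 h0
  rw [map_smul, smul_eq_mul, inv_mul_eq_div, lt_div_iff₀ hn] at h
  exact h

theorem IsCone.exists_ne_zero {K : Set E} (hK : IsCone K) (hne : K ≠ {0}) :
    ∃ k ∈ K, k ≠ 0 := by
  by_contra! h
  exact hne (Subset.antisymm h (by simpa using hK.1))

theorem IsCone.closure_convexHull {K : Set E} (hK : IsCone K) :
    IsCone (closure (convexHull ℝ K)) := by
  refine ⟨subset_closure (subset_convexHull ℝ K hK.1), fun t ht x hx => ?_⟩
  have hmaps : MapsTo (fun y : E => t • y) (convexHull ℝ K) (convexHull ℝ K) := by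
    intro y hy
    refine convexHull_min (t := (fun y : E => t • y) ⁻¹' convexHull ℝ K)
      (fun z hz => subset_convexHull ℝ K (hK.2 t ht z hz)) ?_ hy
    exact (convex_convexHull ℝ K).linear_preimage (LinearMap.lsmul ℝ E t)
  exact hmaps.closure (continuous_const_smul t) hx

theorem normBase_neg {F : Type*} [NormedAddCommGroup F] (K : Set F) :
    normBase (-K) = -normBase K := by
  ext x
  simp [normBase]

theorem closure_convexHull_subset_of_convex_of_isClosed {s t : Set E} (hst : s ⊆ t)
    (ht : Convex ℝ t) (htc : IsClosed t) : closure (convexHull ℝ s) ⊆ t :=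
  closure_minimal (convexHull_min hst ht) htc

theorem le_apply_of_mem_closure_convexHull (f : E →L[ℝ] ℝ) {s : Set E} {c : ℝ}
    (hf : ∀ x ∈ s, c ≤ f x) {x : E} (hx : x ∈ closure (convexHull ℝ s)) : c ≤ f x :=
  closure_convexHull_subset_of_convex_of_isClosed (t := {y | c ≤ f y}) hf
    (convex_halfSpace_ge f.toLinearMap.isLinear c) (isClosed_le continuous_const f.continuous) hx

/-- Sublevel sets of `f + α‖·‖` are closed and convex, so a bound passes to the closed hull. -/
theorem apply_add_mul_norm_nonpos_of_mem_closure_convexHull (f : E →L[ℝ] ℝ) {α : ℝ} (hα : 0 ≤ α)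
    {s : Set E} (hf : ∀ x ∈ s, f x + α * ‖x‖ ≤ 0) {x : E}
    (hx : x ∈ closure (convexHull ℝ s)) : f x + α * ‖x‖ ≤ 0 := by
  have hconv : ConvexOn ℝ univ (fun y : E => f y + α * ‖y‖) :=
    (f.toLinearMap.convexOn convex_univ).add ((convexOn_norm convex_univ).smul hα)
  refine closure_convexHull_subset_of_convex_of_isClosed (t := {y | f y + α * ‖y‖ ≤ 0}) hf ?_
    (isClosed_le (by fun_prop) continuous_const) hx
  simpa using hconv.convex_le 0

theorem continuous_apply_toWeakSpace_symm (f : E →L[ℝ] ℝ) :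
    Continuous fun y : WeakSpace ℝ E => f ((toWeakSpace ℝ E).symm y) :=
  WeakBilin.eval_continuous (topDualPairing ℝ E).flip f

theorem le_apply_of_mem_wClosure (f : E →L[ℝ] ℝ) {s : Set E} {c : ℝ}
    (hf : ∀ x ∈ s, c ≤ f x) {x : E} (hx : x ∈ wClosure s) : c ≤ f x := by
  obtain ⟨y, hy, rfl⟩ := hx
  refine closure_minimal (t := {y : WeakSpace ℝ E | c ≤ f ((toWeakSpace ℝ E).symm y)}) ?_
    (isClosed_le continuous_const (continuous_apply_toWeakSpace_symm f)) hy
  rintro _ ⟨z, hz, rfl⟩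
  simpa using hf z hz

/-- A functional exceeding `c` on the weak closure of a relatively weakly compact set
exceeds `c` uniformly. -/
theorem exists_forall_le_apply_of_wClosure (f : E →L[ℝ] ℝ) {s t : Set E} {c : ℝ}
    (ht : WeaklyCompact t) (hst : s ⊆ t) (hf : ∀ x ∈ wClosure s, c < f x) :
    ∃ d, c < d ∧ ∀ x ∈ s, d ≤ f x := by
  obtain rfl | hne := s.eq_empty_or_nonempty
  · exact ⟨c + 1, by simp, by simp⟩
  have hcpt : IsCompact (closure (toWeakSpace ℝ E '' s)) :=
    ht.closure_of_subset (image_mono hst)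
  obtain ⟨y, hy, hmin⟩ := hcpt.exists_isMinOn (hne.image _).closure
    (continuous_apply_toWeakSpace_symm f).continuousOn
  refine ⟨_, hf _ (mem_image_of_mem _ hy), fun x hx => ?_⟩
  simpa using hmin (subset_closure (mem_image_of_mem (toWeakSpace ℝ E) hx))

/-- Strict separation of a weakly compact convex set from a closed convex set. -/
theorem exists_strict_separation_of_weaklyCompact {s t : Set E} (hs : Convex ℝ s)
    (hsc : WeaklyCompact s) (ht : Convex ℝ t) (htc : IsClosed t) (hst : Disjoint s t) :
    ∃ (f : E →L[ℝ] ℝ) (u v : ℝ), (∀ x ∈ s, f x < u) ∧ u < v ∧ ∀ x ∈ t, v < f x := by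
  have htw : IsClosed (toWeakSpace ℝ E '' t) := by
    rw [← htc.closure_eq, ht.toWeakSpace_closure ℝ]
    exact isClosed_closure
  have : LocallyConvexSpace ℝ (WeakSpace ℝ E) :=
    inferInstanceAs (LocallyConvexSpace ℝ (WeakBilin (topDualPairing ℝ E).flip))
  obtain ⟨f, u, v, hfs, huv, hft⟩ := geometric_hahn_banach_compact_closed
    (hs.linear_image (toWeakSpace ℝ E).toLinearMap) hsc
    (ht.linear_image (toWeakSpace ℝ E).toLinearMap) htw
    ((disjoint_image_iff (toWeakSpace ℝ E).injective).2 hst)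
  exact ⟨f.comp (toWeakSpaceCLM ℝ E), u, v, fun x hx => hfs _ (mem_image_of_mem _ hx), huv,
    fun x hx => hft _ (mem_image_of_mem _ hx)⟩

theorem zero_mem_convBase0 (A : Set E) : (0 : E) ∈ convBase0 A :=
  subset_convexHull ℝ _ (by simp)

theorem closure_convBase_subset {C : Set E} (hC : Convex ℝ C) (hCc : IsClosed C) :
    closure (convBase C) ⊆ C :=
  closure_convexHull_subset_of_convex_of_isClosed (fun _ hx => hx.1) hC hCc

theorem closure_convBase0_subset {A : Set E} (h0 : (0 : E) ∈ A) (hA : Convex ℝ A)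
    (hAc : IsClosed A) : closure (convBase0 A) ⊆ A :=
  closure_convexHull_subset_of_convex_of_isClosed
    (union_subset (by simpa using h0) fun _ hx => hx.1) hA hAc

/-- A functional bounded below on a cone is nonnegative on it. -/
theorem IsCone.apply_nonneg_of_bddBelow {A : Set E} (hA : IsCone A) (f : E →L[ℝ] ℝ) {c : ℝ}
    (hf : ∀ a ∈ A, c < f a) {a : E} (ha : a ∈ A) : 0 ≤ f a := by
  by_contra! hneg
  have hc : c < 0 := by simpa using hf 0 hA.1
  have h := hf _ (hA.2 (c / f a) (div_nonneg_of_nonpos hc.le hneg.le) a ha)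
  rw [map_smul, smul_eq_mul, div_mul_cancel₀ _ hneg.ne] at h
  exact lt_irrefl _ h

/-- Disjointness of the closed bases yields a separating pair `(f, α)` with `α > 0`. -/
theorem exists_augWSharpCone_of_disjoint {K A : Set E} (hK : IsCone K) (hA : IsCone A)
    (hcomp : WeaklyCompact (closure (convBase (-K))))
    (h : closure (convBase0 A) ∩ closure (convBase (-K)) = ∅) :
    ∃ f : E →L[ℝ] ℝ, ∃ α : ℝ, (f, α) ∈ augWSharpCone K ∧ 0 < α ∧
      (∀ a ∈ A, a ≠ 0 → 0 < f a + α * ‖a‖) ∧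
      (∀ k ∈ (-K : Set E), k ≠ 0 → f k + α * ‖k‖ < 0) := by
  obtain ⟨f, u, v, hfK, huv, hfA⟩ := exists_strict_separation_of_weaklyCompact
    (convex_convexHull ℝ _).closure hcomp (convex_convexHull ℝ _).closure isClosed_closure
    (disjoint_iff_inter_eq_empty.2 ((inter_comm _ _).trans h))
  have hv : v < 0 := by simpa using hfA 0 (subset_closure (zero_mem_convBase0 A))
  have hbase : ∀ b ∈ normBase K, -u < f b := fun b hb => by
    have := hfK (-b) (subset_closure (subset_convexHull ℝ _ (by simpa [normBase_neg] using hb)))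
    rw [map_neg] at this
    linarith
  have hpos : ∀ k ∈ K, k ≠ 0 → -u * ‖k‖ < f k := fun k hk h0 =>
    hK.lt_apply_of_normBase f hbase hk h0
  refine ⟨f, -v, ⟨by simpa using hv.le, fun k hk h0 => ?_, fun y hy => ?_⟩, by simpa using hv,
    fun a ha h0 => ?_, fun k hk h0 => ?_⟩
  · have := hpos k hk h0
    have := mul_nonneg (neg_nonneg.2 (huv.trans hv).le) (norm_nonneg k)
    change 0 < f k
    linarith
  · have := le_apply_of_mem_wClosure f (fun b hb => (hbase b hb).le) hy
    change -v < f y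
    linarith
  · have := hA.lt_apply_of_normBase f
      (fun b hb => hfA b (subset_closure (subset_convexHull ℝ _ (Or.inr hb)))) ha h0
    linarith
  · have hlt := hpos (-k) hk (neg_ne_zero.2 h0)
    rw [norm_neg, map_neg] at hlt
    nlinarith [norm_nonneg k]

/-- A separating pair `(f, α)` forces the closed bases to be disjoint. -/
theorem disjoint_of_exists_augWSharpCone {K A : Set E}
    (hcomp : WeaklyCompact (closure (convBase (-K)))) {f : E →L[ℝ] ℝ} {α : ℝ}
    (hf : (f, α) ∈ augWSharpCone K) (hfA : ∀ a ∈ A, a ≠ 0 → 0 < f a + α * ‖a‖) :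
    closure (convBase0 A) ∩ closure (convBase (-K)) = ∅ := by
  obtain ⟨hα, -, hfK⟩ := hf
  have hsub : normBase K ⊆ -closure (convBase (-K)) := fun x hx =>
    subset_closure (subset_convexHull ℝ _ (by simpa [normBase_neg] using hx))
  have hcomp' : WeaklyCompact (-closure (convBase (-K))) := by
    have h := IsCompact.neg hcomp
    rw [← image_neg_eq_neg, image_image] at h
    rw [WeaklyCompact, ← image_neg_eq_neg, image_image]
    simpa only [map_neg] using h
  obtain ⟨d, hd, hle⟩ := exists_forall_le_apply_of_wClosure f hcomp' hsub hfK
  rw [eq_empty_iff_forall_notMem]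
  rintro x ⟨hxA, hxK⟩
  have hlow : -α ≤ f x := by
    refine le_apply_of_mem_closure_convexHull f ?_ hxA
    rintro y (rfl | hy)
    · simpa using hα
    · have := hfA y hy.1 (norm_ne_zero_iff.1 (by simp [hy.2]))
      rw [hy.2] at this
      linarith
  have hup : d ≤ (-f) x := by
    refine le_apply_of_mem_closure_convexHull (-f) (fun y hy => ?_) hxK
    rw [normBase_neg] at hy
    simpa using hle _ hy
  have : (-f) x = -f x := rfl
  change α < d at hd
  linarith

theorem stmt18 (K A : Set E) (hK : IsNontrivialCone K) (hA : IsNontrivialCone A)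
    (hAcl : IsClosed A) (hAcv : Convex ℝ A)
    (hcomp : WeaklyCompact (closure (convBase (-K)))) :
    ((closure (convBase0 A) ∩ closure (convBase (-K)) = ∅) ↔
      (∃ f : E →L[ℝ] ℝ, ∃ α : ℝ, (f, α) ∈ augWSharpCone K ∧ 0 < α ∧
        (∀ a ∈ A, a ≠ 0 → 0 < f a + α * ‖a‖) ∧
        (∀ k ∈ (-K : Set E), k ≠ 0 → f k + α * ‖k‖ < 0))) ∧
    ((closure (convBase0 A) ∩ closure (convBase (-K)) = ∅) ↔
      (∃ f : E →L[ℝ] ℝ, ∃ α : ℝ, (f, α) ∈ augWSharpCone K ∧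
        (∀ a ∈ A, a ≠ 0 → 0 < f a + α * ‖a‖) ∧
        (∀ k ∈ (-K : Set E), k ≠ 0 → f k + α * ‖k‖ < 0))) ∧
    ((closure (convBase0 A) ∩ closure (convBase (-K)) = ∅) ↔
      (A ∩ closure (convexHull ℝ (-K)) = {0} ∧ (0 : E) ∉ closure (convBase (-K)))) ∧
    (WeaklyCompact (closure (convBase (closure (convexHull ℝ K)))) →
      ((closure (convBase0 A) ∩ closure (convBase (-K)) = ∅) ↔
        ((0 : E) ∉ closure (convBase (-K)) ∧
          ∃ f : E →L[ℝ] ℝ, f ≠ 0 ∧ (∀ a ∈ A, 0 ≤ f a) ∧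
            ∀ k ∈ -(closure (convexHull ℝ K)), k ≠ 0 → f k < 0))) := by
  have hKc := hK.1
  have hAc := hA.1
  have h12 := exists_augWSharpCone_of_disjoint hKc hAc hcomp
  have hneg : closure (convexHull ℝ (-K)) = -closure (convexHull ℝ K) := by
    rw [convexHull_neg, neg_closure]
  have h41 : A ∩ closure (convexHull ℝ (-K)) = {0} → (0 : E) ∉ closure (convBase (-K)) →
      closure (convBase0 A) ∩ closure (convBase (-K)) = ∅ := by
    intro hcap h0
    rw [eq_empty_iff_forall_notMem]
    rintro x ⟨hxA, hxK⟩
    have hx : x ∈ A ∩ closure (convexHull ℝ (-K)) :=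
      ⟨closure_convBase0_subset hAc.1 hAcv hAcl hxA,
        closure_mono (convexHull_mono fun _ hy => hy.1) hxK⟩
    rw [hcap, mem_singleton_iff] at hx
    exact h0 (hx ▸ hxK)
  have hzero : (0 : E) ∈ A ∩ closure (convexHull ℝ (-K)) := ⟨hAc.1, hKc.neg.closure_convexHull.1⟩
  have hzero_notMem : closure (convBase0 A) ∩ closure (convBase (-K)) = ∅ →
      (0 : E) ∉ closure (convBase (-K)) := fun h h0 =>
    (h ▸ ⟨subset_closure (zero_mem_convBase0 A), h0⟩ : (0 : E) ∈ (∅ : Set E))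
  have hhull : ∀ {f : E →L[ℝ] ℝ} {α : ℝ}, 0 < α →
      (∀ k ∈ (-K : Set E), k ≠ 0 → f k + α * ‖k‖ < 0) →
      ∀ k ∈ closure (convexHull ℝ (-K)), f k + α * ‖k‖ ≤ 0 := by
    intro f α hα hfK k hk
    refine apply_add_mul_norm_nonpos_of_mem_closure_convexHull f hα.le (fun y hy => ?_) hk
    obtain rfl | h0 := eq_or_ne y 0
    · simp
    · exact (hfK y hy h0).le
  have h14 : closure (convBase0 A) ∩ closure (convBase (-K)) = ∅ →
      A ∩ closure (convexHull ℝ (-K)) = {0} := by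
    intro h
    obtain ⟨f, α, -, hα, hfA, hfK⟩ := h12 h
    refine Subset.antisymm (fun x hx => ?_) (by simpa using hzero)
    by_contra h0
    exact (hfA x hx.1 h0).not_ge (hhull hα hfK x hx.2)
  refine ⟨⟨h12, fun ⟨f, α, hf, _, hfA, _⟩ => disjoint_of_exists_augWSharpCone hcomp hf hfA⟩,
    ⟨fun h => ?_, fun ⟨f, α, hf, hfA, _⟩ => disjoint_of_exists_augWSharpCone hcomp hf hfA⟩,
    ⟨fun h => ⟨h14 h, hzero_notMem h⟩, fun h => h41 h.1 h.2⟩,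
    fun hcompQ => ⟨fun h => ⟨hzero_notMem h, ?_⟩, fun ⟨h0, f, _, hfA, hfK⟩ => h41 ?_ h0⟩⟩
  · obtain ⟨f, α, hf, -, hfA, hfK⟩ := h12 h
    exact ⟨f, α, hf, hfA, hfK⟩
  · obtain ⟨f, α, -, hα, -, hfK⟩ := h12 h
    have hQ : IsCone (closure (convexHull ℝ K)) := hKc.closure_convexHull
    have hQcv : Convex ℝ (closure (convexHull ℝ K)) := (convex_convexHull ℝ K).closure
    have h0Q : (0 : E) ∉ closure (convBase (closure (convexHull ℝ K))) := by
      intro h0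
      have hle : α ≤ f 0 := by
        refine le_apply_of_mem_closure_convexHull f (fun y hy => ?_) h0
        have := hhull hα hfK (-y) (by simpa [hneg] using hy.1)
        rw [norm_neg, hy.2, map_neg] at this
        linarith
      rw [map_zero] at hle
      exact hα.not_ge hle
    have hdisj : Disjoint (closure (convBase (closure (convexHull ℝ K)))) (-A) := by
      rw [disjoint_left]
      intro x hxQ hxA
      have hx : -x ∈ A ∩ closure (convexHull ℝ (-K)) :=
        ⟨hxA, by simpa [hneg] using closure_convBase_subset hQcv isClosed_closure hxQ⟩
      rw [h14 h, mem_singleton_iff, neg_eq_zero] at hx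
      exact h0Q (hx ▸ hxQ)
    obtain ⟨g, u, v, hgQ, huv, hgA⟩ := exists_strict_separation_of_weaklyCompact
      (convex_convexHull ℝ _).closure hcompQ hAcv.neg hAcl.neg hdisj
    have hv : v < 0 := by simpa using hgA 0 (by simpa using hAc.1)
    have hneg_lt : ∀ k ∈ closure (convexHull ℝ K), k ≠ 0 → g k < 0 := by
      intro k hk h0
      have := hQ.lt_apply_of_normBase (-g) (c := 0) (fun b hb => by
        have := hgQ b (subset_closure (subset_convexHull ℝ _ hb))
        change 0 < -g b
        linarith) hk h0
      simpa using this
    refine ⟨-g, fun hg => ?_, fun a ha => ?_, fun k hk h0 => ?_⟩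
    · obtain ⟨k, hk, h0⟩ := hKc.exists_ne_zero hK.2.1
      have := hneg_lt k (subset_closure (subset_convexHull ℝ K hk)) h0
      rw [neg_eq_zero.1 hg] at this
      simp at this
    · have := hAc.neg.apply_nonneg_of_bddBelow g hgA (a := -a) (by simpa using ha)
      simpa using this
    · simpa using hneg_lt (-k) hk (neg_ne_zero.2 h0)
  · refine Subset.antisymm (fun x hx => ?_) (by simpa using hzero)
    by_contra h0
    exact (hfA x hx.1).not_gt (hfK x (hneg ▸ hx.2) h0)
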